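/- Let n, d, k be integers with d ≥ 3 and 5 ≤ k ≤ n, and let A ⊆ [2^n]^d satisfy Vol(A) ≤ 1/2. Then E[|μ_k([2^n]^d)|]·Vol(A) ≤ 2·(√2)^{16−k}·Per(A). -/

import Mathlib

open MeasureTheory Finset

noncomputable section

/-- Points of the grid `[2^n]^d` (coordinates taken 0-based). -/
abbrev GridPt (n d : ℕ) := Fin d → Fin (2^n)

/-- Normalized counting "volume" of a subset of the grid: `Vol(A) = 2^{-nd}|A|`. -/
def Vol (n d : ℕ) (A : Finset (GridPt n d)) : ℝ := (A.card : ℝ) / 2^(n*d)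

/-- The ℓ1 metric on the grid. -/
def gdist {n d : ℕ} (u v : GridPt n d) : ℝ := ∑ i, |((u i : ℕ) : ℝ) - ((v i : ℕ) : ℝ)|

/-- Indices of the dyadic cubes in `D_k`. -/
abbrev CubeIdx (d k : ℕ) := Fin d → Fin (2^k)

/-- The dyadic cube of side-cardinality `2^(n-k)` indexed by `j ∈ {0,…,2^k-1}^d`. -/
def cube (n d k : ℕ) (j : CubeIdx d k) : Finset (GridPt n d) :=
  Finset.univ.filter (fun x => ∀ i, (x i : ℕ) / 2^(n-k) = (j i : ℕ))

/-- `p = 2^{-4d}`. -/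
def pp (d : ℕ) : ℝ := ((2:ℝ)^(4*d))⁻¹

/-- The law of each `X_Q`: takes values `±1` with probability `p/2` each
and `0` with probability `1-p`. -/
def stepMeasure (d : ℕ) : Measure ℝ :=
  (Real.toNNReal (pp d / 2)) • Measure.dirac (1:ℝ)
  + (Real.toNNReal (pp d / 2)) • Measure.dirac (-1:ℝ)
  + (Real.toNNReal (1 - pp d)) • Measure.dirac (0:ℝ)

instance (d : ℕ) : IsFiniteMeasure (stepMeasure d) := by
  unfold stepMeasure; infer_instance

/-- The joint law of the i.i.d. family `{X_Q}_{Q ∈ D_k}`; a sample point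
`ω : CubeIdx d k → ℝ` records the values `X_Q = ω Q`. -/
def prodMeasure (d k : ℕ) : Measure (CubeIdx d k → ℝ) :=
  Measure.pi fun _ => stepMeasure d

/-- `μ_k(A) = ∑_{Q ∈ D_k} p⁻¹ 2^k X_Q Vol(A ∩ Q)`, as a function of the sample point `ω`. -/
def muMeas (n d k : ℕ) (A : Finset (GridPt n d)) (ω : CubeIdx d k → ℝ) : ℝ :=
  ∑ j : CubeIdx d k, (pp d)⁻¹ * 2^k * ω j * Vol n d (A ∩ cube n d k j)

/-- Ordered edges of the grid graph (each unordered edge `{u, u+e_i}` listed exactly once,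
in the increasing direction). -/
def edgePairs (n d : ℕ) : Finset (GridPt n d × GridPt n d) :=
  Finset.univ.filter (fun e =>
    ∃ i, ((e.2 i : ℕ) = (e.1 i : ℕ) + 1) ∧ ∀ j, j ≠ i → e.2 j = e.1 j)

/-- The edge boundary `∂A` of a subset `A` of the grid. -/
def bdry (n d : ℕ) (A : Finset (GridPt n d)) : Finset (GridPt n d × GridPt n d) :=
  (edgePairs n d).filter (fun e => (e.1 ∈ A ∧ e.2 ∉ A) ∨ (e.1 ∉ A ∧ e.2 ∈ A))

/-- The normalized perimeter `Per(A) = (1/d)·2^{-n(d-1)}·|∂A|`. -/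
def Per (n d : ℕ) (A : Finset (GridPt n d)) : ℝ :=
  (1/(d:ℝ)) * ((2:ℝ)^(n*(d-1)))⁻¹ * ((bdry n d A).card : ℝ)

/-! Since `μ_k([2^n]^d)` is a sum of independent centred variables, the square of
`E|μ_k([2^n]^d)|` is at most the variance of that sum, which is `2^{4d+2k-kd}`. For the perimeter,
join each `x ∈ A` to each `y ∉ A` by changing the coordinates of `x` into those of `y` one at a
time: one of the `d` axis-parallel lines so traversed carries an edge of `∂A`. The `i`-th corner of
this path, paired with the complementary splice of `y` and `x`, determines `(x, y)`, so every line
is charged equally often, and `Vol(A)(1 - Vol(A)) ≤ d·Per(A)` follows. As `d² ≤ 2^{d+1}`, the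
product of the two bounds is controlled as soon as `5d + 3k ≤ 15 + kd`, that is,
`(d - 3)(k - 5) ≥ 0`. -/

open ProbabilityTheory

section Variance

variable {Ω : Type*} [MeasurableSpace Ω] {μ : Measure Ω} [IsProbabilityMeasure μ]

lemma sq_integral_abs_le_integral_sq {f : Ω → ℝ} (hf : MemLp f 2 μ) :
    (∫ ω, |f ω| ∂μ) ^ 2 ≤ ∫ ω, f ω ^ 2 ∂μ := by
  have h := variance_nonneg |f| μ
  rw [variance_eq_sub hf.abs] at h
  simpa using h

lemma sq_integral_abs_le_variance {f : Ω → ℝ} (hf : MemLp f 2 μ) (hf₀ : ∫ ω, f ω ∂μ = 0) :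
    (∫ ω, |f ω| ∂μ) ^ 2 ≤ Var[f; μ] := by
  rw [variance_of_integral_eq_zero hf.aestronglyMeasurable.aemeasurable hf₀]
  exact sq_integral_abs_le_integral_sq hf

end Variance

lemma sq_integral_abs_sum_pi_le {ι : Type*} [Fintype ι] {Ω : ι → Type*}
    [∀ i, MeasurableSpace (Ω i)] {μ : ∀ i, Measure (Ω i)} [∀ i, IsProbabilityMeasure (μ i)]
    {X : ∀ i, Ω i → ℝ} (hX : ∀ i, MemLp (X i) 2 (μ i)) (hX₀ : ∀ i, ∫ x, X i x ∂μ i = 0) :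
    (∫ ω, |∑ i, X i (ω i)| ∂Measure.pi μ) ^ 2 ≤ ∑ i, Var[X i; μ i] := by
  have hmem (i : ι) : MemLp (fun ω : ∀ i, Ω i ↦ X i (ω i)) 2 (Measure.pi μ) :=
    (hX i).comp_measurePreserving (measurePreserving_eval μ i)
  have hmean : ∫ ω, ∑ i, X i (ω i) ∂Measure.pi μ = 0 := by
    rw [integral_finsetSum _ fun i _ ↦ (hmem i).integrable one_le_two]
    exact sum_eq_zero fun i _ ↦ (integral_comp_eval (hX i).aestronglyMeasurable).trans (hX₀ i)
  have hsum : (fun ω : ∀ i, Ω i ↦ ∑ i, X i (ω i)) = ∑ i, fun ω ↦ X i (ω i) := by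
    ext ω
    simp
  rw [← variance_sum_pi hX, ← hsum]
  exact sq_integral_abs_le_variance (memLp_finsetSum _ fun i _ ↦ hmem i) hmean

lemma pp_pos (d : ℕ) : 0 < pp d := by
  unfold pp
  positivity

lemma pp_le_one (d : ℕ) : pp d ≤ 1 :=
  inv_le_one_of_one_le₀ (one_le_pow₀ one_le_two)

lemma integrable_smul_dirac {α E : Type*} [MeasurableSpace α] [MeasurableSingletonClass α]
    [NormedAddCommGroup E] (f : α → E) (c : NNReal) (a : α) :
    Integrable f (c • Measure.dirac a) :=
  (integrable_dirac (by simp)).smul_measure_nnreal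

lemma integrable_stepMeasure {E : Type*} [NormedAddCommGroup E] (d : ℕ) (f : ℝ → E) :
    Integrable f (stepMeasure d) :=
  ((integrable_smul_dirac f _ _).add_measure (integrable_smul_dirac f _ _)).add_measure
    (integrable_smul_dirac f _ _)

lemma integral_stepMeasure {E : Type*} [NormedAddCommGroup E] [NormedSpace ℝ E] [CompleteSpace E]
    (d : ℕ) (f : ℝ → E) :
    ∫ x, f x ∂stepMeasure d = (pp d / 2) • f 1 + (pp d / 2) • f (-1) + (1 - pp d) • f 0 := by
  have h := integrable_smul_dirac f
  rw [stepMeasure, integral_add_measure ((h _ _).add_measure (h _ _)) (h _ _),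
    integral_add_measure (h _ _) (h _ _)]
  simp only [integral_smul_nnreal_measure, integral_dirac, NNReal.smul_def,
    Real.coe_toNNReal _ (half_pos (pp_pos d)).le, Real.coe_toNNReal _ (sub_nonneg.2 (pp_le_one d))]

instance (d : ℕ) : IsProbabilityMeasure (stepMeasure d) := by
  have h := integral_stepMeasure d fun _ ↦ (1 : ℝ)
  simp only [integral_const, smul_eq_mul, mul_one, add_halves, add_sub_cancel] at h
  exact isProbabilityMeasure_iff_real.2 h

lemma memLp_two_id_stepMeasure (d : ℕ) : MemLp id 2 (stepMeasure d) :=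
  (memLp_two_iff_integrable_sq aestronglyMeasurable_id).2 (integrable_stepMeasure d _)

lemma integral_id_stepMeasure (d : ℕ) : ∫ x, x ∂stepMeasure d = 0 := by
  simp [integral_stepMeasure]

lemma variance_id_stepMeasure (d : ℕ) : Var[id; stepMeasure d] = pp d := by
  rw [variance_of_integral_eq_zero aemeasurable_id (integral_id_stepMeasure d)]
  simp [integral_stepMeasure]

lemma card_filter_val_div_eq {N m j : ℕ} (hm : 0 < m) (hj : (j + 1) * m ≤ N) :
    #{a : Fin N | (a : ℕ) / m = j} = m := by
  have hmap : ({a : Fin N | (a : ℕ) / m = j} : Finset _).map Fin.valEmbedding =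
      Ico (j * m) ((j + 1) * m) := by
    ext a
    have hdiv : a / m = j ↔ j * m ≤ a ∧ a < (j + 1) * m := by
      rw [Nat.div_eq_iff hm, add_one_mul]
      lia
    simp only [mem_map, mem_filter_univ, Fin.valEmbedding_apply, mem_Ico, ← hdiv]
    exact ⟨by rintro ⟨b, hb, rfl⟩; exact hb, fun h ↦ ⟨⟨a, (hdiv.1 h).2.trans_le hj⟩, h, rfl⟩⟩
  rw [← card_map, hmap, Nat.card_Ico, add_one_mul, Nat.add_sub_cancel_left]

section TotalMass

variable {n k : ℕ}

lemma card_cube {d : ℕ} (hkn : k ≤ n) (j : CubeIdx d k) :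
    #(cube n d k j) = (2 ^ (n - k)) ^ d := by
  have hside (i : Fin d) : ((j i : ℕ) + 1) * 2 ^ (n - k) ≤ 2 ^ n :=
    calc ((j i : ℕ) + 1) * 2 ^ (n - k) ≤ 2 ^ k * 2 ^ (n - k) := by
          gcongr
          exact (j i).2
      _ = 2 ^ n := by rw [← pow_add, Nat.add_sub_cancel' hkn]
  have h : cube n d k j =
      Fintype.piFinset fun i ↦ ({a | (a : ℕ) / 2 ^ (n - k) = j i} : Finset (Fin (2 ^ n))) := by
    ext x
    simp [cube]
  simp [h, Fintype.card_piFinset, card_filter_val_div_eq, hside]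

lemma vol_cube {d : ℕ} (hkn : k ≤ n) (j : CubeIdx d k) :
    Vol n d (cube n d k j) = ((2 : ℝ) ^ (k * d))⁻¹ := by
  rw [Vol, card_cube hkn, div_eq_iff (by positivity), eq_inv_mul_iff_mul_eq₀ (by positivity)]
  push_cast
  rw [← pow_mul, ← pow_add, ← add_mul, Nat.add_sub_cancel' hkn]

lemma sq_integral_abs_muMeas_univ_le (d : ℕ) (hkn : k ≤ n) :
    (∫ ω, |muMeas n d k univ ω| ∂prodMeasure d k) ^ 2 ≤ 2 ^ (4 * d + 2 * k) / 2 ^ (k * d) := by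
  set c : ℝ := (pp d)⁻¹ * 2 ^ k * (2 ^ (k * d))⁻¹ with hc
  have hmu (ω : CubeIdx d k → ℝ) : muMeas n d k univ ω = ∑ j, c * ω j := by
    simp only [muMeas, univ_inter, vol_cube hkn, hc]
    exact sum_congr rfl fun j _ ↦ by ring
  have hvar : Var[fun x ↦ c * x; stepMeasure d] = c ^ 2 * pp d :=
    (variance_const_mul c id _).trans (by rw [variance_id_stepMeasure])
  calc (∫ ω, |muMeas n d k univ ω| ∂prodMeasure d k) ^ 2
      = (∫ ω, |∑ j, c * ω j| ∂prodMeasure d k) ^ 2 := by simp only [hmu]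
    _ ≤ ∑ _ : CubeIdx d k, Var[fun x ↦ c * x; stepMeasure d] :=
        sq_integral_abs_sum_pi_le (X := fun _ x ↦ c * x)
          (fun _ ↦ (memLp_two_id_stepMeasure d).const_mul c) fun _ ↦ by
            rw [integral_const_mul, integral_id_stepMeasure, mul_zero]
    _ = 2 ^ (k * d) * (c ^ 2 * pp d) := by
        simp [hvar, pow_mul]
    _ = 2 ^ (4 * d + 2 * k) / 2 ^ (k * d) := by
        rw [hc, pp, pow_add, mul_comm 2 k, pow_mul 2 k 2]
        field_simp

end TotalMass

section Splicing

variable {ι : Type*} {α : ι → Type*}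

lemma exists_piecewise_Iio_mem_update_notMem [LinearOrder ι] [Finite ι] [LocallyFiniteOrderBot ι]
    {A : Set (∀ i, α i)} {x y : ∀ i, α i} (hx : x ∈ A) (hy : y ∉ A) :
    ∃ i, (Iio i).piecewise y x ∈ A ∧ Function.update ((Iio i).piecewise y x) i (y i) ∉ A := by
  cases nonempty_fintype ι
  by_contra! hstep
  have hlower (s : Finset ι) : IsLowerSet (s : Set ι) → s.piecewise y x ∈ A := by
    induction s using Finset.induction_on_max with
    | empty => simpa using fun _ ↦ hx
    | insert i s hlt ih =>
      intro hs
      have hsi : s = Iio i := by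
        ext j
        refine ⟨fun hj ↦ mem_Iio.2 (hlt j hj), fun hj ↦ ?_⟩
        have hji : j ∈ insert i s := hs (mem_Iio.1 hj).le (mem_insert_self i s)
        exact (mem_insert.1 hji).resolve_left (mem_Iio.1 hj).ne
      subst hsi
      rw [piecewise_insert]
      exact hstep i (ih (by simpa using isLowerSet_Iio i))
  exact hy (by simpa using hlower univ (by simpa using isLowerSet_univ))

lemma sum_piecewise [Fintype ι] [DecidableEq ι] [∀ i, Fintype (α i)] {M : Type*} [AddCommMonoid M]
    (s : Finset ι) (f : (∀ i, α i) → M) :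
    ∑ q : (∀ i, α i) × (∀ i, α i), f (s.piecewise q.2 q.1) =
      Fintype.card (∀ i, α i) • ∑ z, f z := by
  have hswap : Function.Involutive fun q : (∀ i, α i) × (∀ i, α i) ↦
      (s.piecewise q.2 q.1, s.piecewise q.1 q.2) := by
    rintro ⟨x, y⟩
    ext i <;> by_cases hi : i ∈ s <;> simp [hi]
  calc ∑ q : (∀ i, α i) × (∀ i, α i), f (s.piecewise q.2 q.1)
      = ∑ q : (∀ i, α i) × (∀ i, α i), f q.1 :=
        Equiv.sum_comp hswap.toPerm fun q ↦ f q.1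
    _ = Fintype.card (∀ i, α i) • ∑ z, f z := by
        simp [Fintype.sum_prod_type, sum_nsmul]

end Splicing

lemma exists_consecutive_mem_notMem {N : ℕ} {S : Set (Fin N)} {a b : Fin N} (ha : a ∈ S)
    (hb : b ∉ S) : ∃ s t : Fin N, (t : ℕ) = s + 1 ∧ (s ∈ S ∧ t ∉ S ∨ s ∉ S ∧ t ∈ S) := by
  obtain ⟨p⟩ := SimpleGraph.pathGraph_preconnected N a b
  obtain ⟨e, -, hfst, hsnd⟩ := p.exists_boundary_dart S ha hb
  rcases SimpleGraph.pathGraph_adj.1 e.adj with h | h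
  · exact ⟨e.fst, e.snd, h.symm, .inl ⟨hfst, hsnd⟩⟩
  · exact ⟨e.snd, e.fst, h.symm, .inr ⟨hsnd, hfst⟩⟩

lemma card_gridPt (n d : ℕ) : Fintype.card (GridPt n d) = 2 ^ (n * d) := by
  simp [pow_mul]

section Isoperimetry

variable {n d : ℕ}

/-- The edges of `∂A` on the line through `z` in direction `e_i`, which witness that `A` separates
points of this line. The line is encoded by any of its points, so `z i` is irrelevant. -/
def lineBdry (A : Finset (GridPt n d)) (i : Fin d) (z : GridPt n d) :
    Finset (GridPt n d × GridPt n d) :=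
  {e ∈ bdry n d A | ∀ j ≠ i, e.1 j = z j ∧ e.2 j = z j}

lemma lineBdry_nonempty {A : Finset (GridPt n d)} {i : Fin d} {z : GridPt n d} {t : Fin (2 ^ n)}
    (hz : z ∈ A) (ht : Function.update z i t ∉ A) : (lineBdry A i z).Nonempty := by
  obtain ⟨a, b, hab, hbdry⟩ := exists_consecutive_mem_notMem
    (S := {s | Function.update z i s ∈ A}) (a := z i) (by simpa using hz) ht
  refine ⟨(Function.update z i a, Function.update z i b), ?_⟩
  have hedge : (Function.update z i a, Function.update z i b) ∈ edgePairs n d :=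
    (mem_filter_univ _).2 ⟨i, by simpa using hab, fun j hj ↦ by simp [hj]⟩
  exact mem_filter.2 ⟨mem_filter.2 ⟨hedge, hbdry⟩, fun j hj ↦ by simp [hj]⟩

lemma card_lines_through_edge_le {e : GridPt n d × GridPt n d} (he : e ∈ edgePairs n d) :
    #{q : Fin d × GridPt n d | ∀ j ≠ q.1, e.1 j = q.2 j ∧ e.2 j = q.2 j} ≤ 2 ^ n := by
  obtain ⟨i₀, hi₀, -⟩ := mem_filter_univ _ |>.1 he
  have hsub : ({q : Fin d × GridPt n d | ∀ j ≠ q.1, e.1 j = q.2 j ∧ e.2 j = q.2 j} : Finset _) ⊆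
      univ.image fun t ↦ (i₀, Function.update e.1 i₀ t) := by
    rintro ⟨i, z⟩ hq
    have hline : ∀ j ≠ i, e.1 j = z j ∧ e.2 j = z j := (mem_filter_univ _).1 hq
    obtain rfl : i₀ = i := by
      by_contra hne
      rw [(hline i₀ hne).1, (hline i₀ hne).2] at hi₀
      omega
    refine mem_image.2 ⟨z i₀, mem_univ _, Prod.ext rfl ?_⟩
    exact Function.update_eq_iff.2 ⟨rfl, fun j hj ↦ (hline j hj).1⟩
  simpa using (card_le_card hsub).trans card_image_le

variable (A : Finset (GridPt n d))

lemma sum_card_lineBdry_le : ∑ i, ∑ z, #(lineBdry A i z) ≤ 2 ^ n * #(bdry n d A) := by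
  calc ∑ i, ∑ z, #(lineBdry A i z)
      = ∑ e ∈ bdry n d A,
          #{q : Fin d × GridPt n d | ∀ j ≠ q.1, e.1 j = q.2 j ∧ e.2 j = q.2 j} := by
        rw [← Fintype.sum_prod_type' (f := fun i z ↦ #(lineBdry A i z))]
        simp only [lineBdry, card_filter]
        exact sum_comm
    _ ≤ #(bdry n d A) • 2 ^ n :=
        sum_le_card_nsmul _ _ _ fun e he ↦ card_lines_through_edge_le (mem_filter.1 he).1
    _ = 2 ^ n * #(bdry n d A) := by rw [smul_eq_mul, mul_comm]

lemma card_mul_card_compl_le : #A * #Aᶜ ≤ 2 ^ (n * d) * (2 ^ n * #(bdry n d A)) := by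
  calc #A * #Aᶜ = ∑ _ ∈ A ×ˢ Aᶜ, 1 := by simp
    _ ≤ ∑ q ∈ A ×ˢ Aᶜ, ∑ i, #(lineBdry A i ((Iio i).piecewise q.2 q.1)) := by
        refine sum_le_sum fun q hq ↦ ?_
        obtain ⟨hx, hy⟩ := mem_product.1 hq
        obtain ⟨i, hi, hi'⟩ := exists_piecewise_Iio_mem_update_notMem (A := (A : Set (GridPt n d)))
          (mem_coe.2 hx) (mt mem_coe.1 (mem_compl.1 hy))
        exact (lineBdry_nonempty hi hi').card_pos.trans_le <|
          single_le_sum (f := fun i ↦ #(lineBdry A i ((Iio i).piecewise q.2 q.1)))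
            (fun _ _ ↦ Nat.zero_le _) (mem_univ i)
    _ ≤ ∑ q : GridPt n d × GridPt n d, ∑ i, #(lineBdry A i ((Iio i).piecewise q.2 q.1)) :=
        sum_le_sum_of_subset (subset_univ _)
    _ = 2 ^ (n * d) * ∑ i, ∑ z, #(lineBdry A i z) := by
        rw [sum_comm, mul_sum]
        exact sum_congr rfl fun i _ ↦ by
          rw [sum_piecewise (Iio i) fun z ↦ #(lineBdry A i z), card_gridPt, smul_eq_mul]
    _ ≤ 2 ^ (n * d) * (2 ^ n * #(bdry n d A)) := by
        gcongr
        exact sum_card_lineBdry_le A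

lemma vol_nonneg : 0 ≤ Vol n d A := by
  unfold Vol
  positivity

lemma per_nonneg : 0 ≤ Per n d A := by
  unfold Per
  positivity

lemma one_sub_vol : 1 - Vol n d A = Vol n d Aᶜ := by
  have h := card_add_card_compl A
  rw [card_gridPt] at h
  rw [Vol, Vol, one_sub_div (by positivity), sub_eq_of_eq_add']
  exact_mod_cast h.symm

lemma vol_mul_one_sub_vol_le_mul_per (hd : d ≠ 0) :
    Vol n d A * (1 - Vol n d A) ≤ d * Per n d A := by
  have hcard : (#A * #Aᶜ : ℝ) ≤ 2 ^ (n * d) * (2 ^ n * #(bdry n d A)) := by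
    exact_mod_cast card_mul_card_compl_le A
  have hpow : (2 : ℝ) ^ (n * d) = 2 ^ n * 2 ^ (n * (d - 1)) := by
    rw [← pow_add, ← mul_one_add, Nat.add_sub_cancel' (Nat.one_le_iff_ne_zero.2 hd)]
  calc Vol n d A * (1 - Vol n d A) = #A * #Aᶜ / (2 ^ (n * d) * 2 ^ (n * d)) := by
        rw [one_sub_vol, Vol, Vol, div_mul_div_comm]
    _ ≤ 2 ^ (n * d) * (2 ^ n * #(bdry n d A)) / (2 ^ (n * d) * 2 ^ (n * d)) := by gcongr
    _ = d * Per n d A := by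
        rw [Per, hpow]
        field_simp

end Isoperimetry

lemma sq_le_two_pow_succ (d : ℕ) : d ^ 2 ≤ 2 ^ (d + 1) := by
  induction d with
  | zero => norm_num
  | succ m ih =>
    rcases lt_or_ge m 3 with hm | hm
    · interval_cases m <;> norm_num
    · rw [pow_succ 2 (m + 1)]
      nlinarith

lemma sqrt_rpow_sq {a : ℝ} (ha : 0 ≤ a) (x : ℝ) : (√a ^ x) ^ 2 = a ^ x := by
  rw [sq, ← Real.mul_rpow (Real.sqrt_nonneg a) (Real.sqrt_nonneg a), Real.mul_self_sqrt ha]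

lemma integral_abs_muMeas_univ_mul_dim_le {n d k : ℕ} (hdk : 5 * d + 3 * k ≤ 15 + k * d)
    (hkn : k ≤ n) :
    (∫ ω, |muMeas n d k univ ω| ∂prodMeasure d k) * d ≤ √2 ^ ((16 : ℝ) - k) := by
  refine le_of_sq_le_sq ?_ (by positivity)
  calc ((∫ ω, |muMeas n d k univ ω| ∂prodMeasure d k) * d) ^ 2
      ≤ 2 ^ (4 * d + 2 * k) / 2 ^ (k * d) * 2 ^ (d + 1) := by
        rw [mul_pow]
        gcongr
        · exact sq_integral_abs_muMeas_univ_le d hkn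
        · exact_mod_cast sq_le_two_pow_succ d
    _ ≤ 2 ^ 16 / 2 ^ k := by
        rw [div_mul_eq_mul_div, div_le_div_iff₀ (by positivity) (by positivity), ← pow_add,
          ← pow_add, ← pow_add]
        exact pow_le_pow_right₀ one_le_two (by lia)
    _ = (√2 ^ ((16 : ℝ) - k)) ^ 2 := by
        rw [sqrt_rpow_sq zero_le_two, Real.rpow_sub_natCast two_ne_zero]
        norm_num

theorem expected_total_mass_mul_vol_le_general {n d k : ℕ} (hd : d ≠ 0)
    (hdk : 5 * d + 3 * k ≤ 15 + k * d) (hkn : k ≤ n) (A : Finset (GridPt n d)) :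
    (∫ ω, |muMeas n d k univ ω| ∂prodMeasure d k) * (Vol n d A * (1 - Vol n d A)) ≤
      √2 ^ ((16 : ℝ) - k) * Per n d A := by
  calc (∫ ω, |muMeas n d k univ ω| ∂prodMeasure d k) * (Vol n d A * (1 - Vol n d A))
      ≤ (∫ ω, |muMeas n d k univ ω| ∂prodMeasure d k) * (d * Per n d A) := by
        gcongr ?_ * ?_
        exact vol_mul_one_sub_vol_le_mul_per A hd
    _ = (∫ ω, |muMeas n d k univ ω| ∂prodMeasure d k) * d * Per n d A := (mul_assoc ..).symm
    _ ≤ √2 ^ ((16 : ℝ) - k) * Per n d A := by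
        gcongr
        · exact per_nonneg A
        · exact integral_abs_muMeas_univ_mul_dim_le hdk hkn

/-- `E[|μ_k([2^n]^d)|]·Vol(A) ≤ 2·(√2)^{16-k}·Per(A)` for `5 ≤ k ≤ n` and `Vol(A) ≤ 1/2`. -/
theorem expected_total_mass_mul_vol_le (n d k : ℕ) (hd : 3 ≤ d) (hk : 5 ≤ k) (hkn : k ≤ n)
    (A : Finset (GridPt n d)) (hVol : Vol n d A ≤ 1/2) :
    (∫ ω, |muMeas n d k Finset.univ ω| ∂(prodMeasure d k)) * Vol n d A
      ≤ 2 * Real.sqrt 2 ^ ((16:ℝ) - (k:ℝ)) * Per n d A := by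
  have hV : Vol n d A ≤ 2 * (Vol n d A * (1 - Vol n d A)) := by nlinarith [vol_nonneg A]
  have h := expected_total_mass_mul_vol_le_general (by lia) (by nlinarith) hkn A
  exact (mul_le_mul_of_nonneg_left hV (by positivity)).trans (by linarith)
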